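/- arXiv:2503.00314 — 2 statements merged into one kernel-verified Lean document; each statement's English description precedes it below -/
import Mathlib

section
/- (Key step in the proof of Theorem 2.) Let q : ℝⁿ → ℝ be a nonnegative Lebesgue-integrable function, v : ℝⁿ → ℝ a nonnegative measurable function, and let ν be the measure on ℝⁿ with density v with respect to Lebesgue measure. Fix α > 0, let A = {x : q(x) ≥ α · v(x)} and c = ∫_A q(x) dx. If B is any measurable subset of ℝⁿ with ∫_B q(x) dx ≥ c, then ν(A ∩ Bᶜ) ≤ ν(B ∩ Aᶜ), where Bᶜ and Aᶜ denote set complements. -/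
open MeasureTheory ENNReal

/-- key step of Theorem 2: with `A = {x : q(x) ≥ α · v(x)}` and
`c = ∫_A q`, any measurable set `B` with `∫_B q ≥ c` satisfies
`ν(A ∩ Bᶜ) ≤ ν(B ∩ Aᶜ)`, where `ν` has density `v` w.r.t. Lebesgue measure. -/
theorem search_time_symmDiff_ineq {n : ℕ}
    (q v : EuclideanSpace ℝ (Fin n) → ℝ)
    (hq_meas : Measurable q) (hq_nonneg : ∀ x, 0 ≤ q x) (hq_int : Integrable q)
    (hv_meas : Measurable v) (hv_nonneg : ∀ x, 0 ≤ v x)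
    (ν : Measure (EuclideanSpace ℝ (Fin n)))
    (hν : ν = volume.withDensity (fun x => ENNReal.ofReal (v x)))
    (α : ℝ) (hα : 0 < α)
    (A : Set (EuclideanSpace ℝ (Fin n))) (hA : A = {x | α * v x ≤ q x})
    (c : ℝ) (hc : c = ∫ x in A, q x)
    (B : Set (EuclideanSpace ℝ (Fin n))) (hB : MeasurableSet B)
    (hBc : c ≤ ∫ x in B, q x) :
    ν (A ∩ Bᶜ) ≤ ν (B ∩ Aᶜ) := by
  have hAm : MeasurableSet A := by
    rw [hA]; exact measurableSet_le (hv_meas.const_mul α) hq_meas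
  have hm1 : MeasurableSet (A ∩ Bᶜ) := hAm.inter hB.compl
  have hm2 : MeasurableSet (B ∩ Aᶜ) := hB.inter hAm.compl
  have hI : ∫ x in A ∩ Bᶜ, q x ≤ ∫ x in B ∩ Aᶜ, q x := by
    have h1 := integral_inter_add_sdiff (μ := volume) (f := q) (s := A) hB hq_int.integrableOn
    have h2 := integral_inter_add_sdiff (μ := volume) (f := q) (s := B) hAm hq_int.integrableOn
    rw [Set.sdiff_eq] at h1 h2
    rw [Set.inter_comm B A] at h2
    linarith
  have hL : ∀ S : Set (EuclideanSpace ℝ (Fin n)),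
      ENNReal.ofReal (∫ x in S, q x) = ∫⁻ x in S, ENNReal.ofReal (q x) := fun S =>
    ofReal_integral_eq_lintegral_ofReal hq_int.integrableOn
      (Filter.Eventually.of_forall hq_nonneg)
  have hN : ∀ S : Set (EuclideanSpace ℝ (Fin n)), MeasurableSet S →
      ENNReal.ofReal α * ν S = ∫⁻ x in S, ENNReal.ofReal (α * v x) := by
    intro S hS
    rw [hν, withDensity_apply _ hS, ← lintegral_const_mul _ hv_meas.ennreal_ofReal]
    simp only [ENNReal.ofReal_mul hα.le]
  have key : ENNReal.ofReal α * ν (A ∩ Bᶜ) ≤ ENNReal.ofReal α * ν (B ∩ Aᶜ) := by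
    calc ENNReal.ofReal α * ν (A ∩ Bᶜ)
        = ∫⁻ x in A ∩ Bᶜ, ENNReal.ofReal (α * v x) := hN _ hm1
      _ ≤ ∫⁻ x in A ∩ Bᶜ, ENNReal.ofReal (q x) := by
          refine setLIntegral_mono' hm1 fun x hx => ENNReal.ofReal_le_ofReal ?_
          have := hx.1
          rw [hA] at this
          exact this
      _ = ENNReal.ofReal (∫ x in A ∩ Bᶜ, q x) := (hL _).symm
      _ ≤ ENNReal.ofReal (∫ x in B ∩ Aᶜ, q x) := ENNReal.ofReal_le_ofReal hI
      _ = ∫⁻ x in B ∩ Aᶜ, ENNReal.ofReal (q x) := hL _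
      _ ≤ ∫⁻ x in B ∩ Aᶜ, ENNReal.ofReal (α * v x) := by
          refine setLIntegral_mono' hm2 fun x hx => ENNReal.ofReal_le_ofReal ?_
          have := hx.2
          rw [hA] at this
          have h3 : ¬ α * v x ≤ q x := this
          exact (not_le.mp h3).le
      _ = ENNReal.ofReal α * ν (B ∩ Aᶜ) := (hN _ hm2).symm
  exact (ENNReal.mul_le_mul_iff_right (ENNReal.ofReal_pos.mpr hα).ne' ENNReal.ofReal_ne_top).mp key
end

section
/- (Theorem 2: level sets of p(x|y)/v(x) give the smallest-search-time credible region.) Let q : ℝⁿ → ℝ be a nonnegative Lebesgue-integrable function (a posterior density, so typically ∫ q = 1), let v : ℝⁿ → ℝ be a nonnegative measurable function, and let ν be the measure on ℝⁿ with density v with respect to Lebesgue measure. Fix α > 0 and let A = {x : q(x) ≥ α · v(x)} and c = ∫_A q(x) dx. Then A minimises the search time among all regions of posterior credibility at least c: for every measurable set B ⊆ ℝⁿ with ∫_B q(x) dx ≥ c, one has ν(B) ≥ ν(A). -/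
open MeasureTheory ENNReal

/-- Theorem 2: the superlevel set `A = {x : q(x) ≥ α · v(x)}` of the
ratio of the posterior density `q` to the search difficulty `v` has the smallest search
time `ν(A)` among all credible regions of level `c = ∫_A q`: every measurable `B` with
`∫_B q ≥ c` satisfies `ν(B) ≥ ν(A)`, where `ν` has density `v` w.r.t. Lebesgue
measure. -/
theorem superlevel_set_minimises_search_time {n : ℕ}
    (q v : EuclideanSpace ℝ (Fin n) → ℝ)
    (hq_meas : Measurable q) (hq_nonneg : ∀ x, 0 ≤ q x) (hq_int : Integrable q)
    (hv_meas : Measurable v) (hv_nonneg : ∀ x, 0 ≤ v x)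
    (ν : Measure (EuclideanSpace ℝ (Fin n)))
    (hν : ν = volume.withDensity (fun x => ENNReal.ofReal (v x)))
    (α : ℝ) (hα : 0 < α)
    (A : Set (EuclideanSpace ℝ (Fin n))) (hA : A = {x | α * v x ≤ q x})
    (c : ℝ) (hc : c = ∫ x in A, q x) :
    ∀ B : Set (EuclideanSpace ℝ (Fin n)), MeasurableSet B →
      c ≤ ∫ x in B, q x → ν A ≤ ν B := by
  intro B hB hcB
  have hAm : MeasurableSet A := by
    rw [hA]; exact measurableSet_le (hv_meas.const_mul α) hq_meas
  have hQ : ∀ S : Set (EuclideanSpace ℝ (Fin n)),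
      ENNReal.ofReal (∫ x in S, q x) = ∫⁻ x in S, ENNReal.ofReal (q x) := fun S =>
    ofReal_integral_eq_lintegral_ofReal hq_int.integrableOn
      (Filter.Eventually.of_forall hq_nonneg)
  have hsplit : ∀ S T : Set (EuclideanSpace ℝ (Fin n)), MeasurableSet T →
      (∫ x in S ∩ T, q x) + ∫ x in S \ T, q x = ∫ x in S, q x := fun S T hT =>
    integral_inter_add_diff hT hq_int.integrableOn
  have h1 := hsplit A B hB
  have h2 := hsplit B A hAm
  rw [Set.inter_comm] at h2
  have h3 : ∫ x in A \ B, q x ≤ ∫ x in B \ A, q x := by linarith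
  have h4 := ENNReal.ofReal_le_ofReal h3
  rw [hQ, hQ] at h4
  have hN : ∀ S : Set (EuclideanSpace ℝ (Fin n)), MeasurableSet S →
      ENNReal.ofReal α * ν S = ∫⁻ x in S, ENNReal.ofReal (α * v x) := by
    intro S hS
    rw [hν, withDensity_apply _ hS, ← lintegral_const_mul _ hv_meas.ennreal_ofReal]
    simp only [ENNReal.ofReal_mul hα.le]
  have h5 : ENNReal.ofReal α * ν (A \ B) ≤ ENNReal.ofReal α * ν (B \ A) := by
    rw [hN _ (hAm.diff hB), hN _ (hB.diff hAm)]
    refine le_trans (setLIntegral_mono' (hAm.diff hB) fun x hx => ?_)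
      (h4.trans (setLIntegral_mono' (hB.diff hAm) fun x hx => ?_))
    · have := hx.1
      rw [hA] at this
      exact ENNReal.ofReal_le_ofReal this
    · have := hx.2
      rw [hA] at this
      exact ENNReal.ofReal_le_ofReal (not_le.mp this).le
  have h6 : ν (A \ B) ≤ ν (B \ A) :=
    (ENNReal.mul_le_mul_iff_right (ENNReal.ofReal_pos.mpr hα).ne' ENNReal.ofReal_ne_top).mp h5
  rw [← measure_inter_add_diff A hB, ← measure_inter_add_diff B hAm, Set.inter_comm B A]
  gcongr
end
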